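/- Let $P_1$ and $P_2$ be two-dimensional lattice polygons in $\mathbb{R}^2$ and let $\Delta_1$ and $\Delta_2$ be regular subdivisions of $P_1$ and $P_2$ respectively. Suppose that $P_1 \cap P_2$ is a segment $[p,q]$ of lattice length $1$ with $p, q \in \mathbb{Z}^2$, that $[p,q]$ is an edge of both $P_1$ and $P_2$, and that $P_3 := P_1 \cup P_2$ is convex. Then $\Delta_3 := \Delta_1 \cup \Delta_2$ is a regular subdivision of $P_3$. -/

import Mathlib

/-- A point of `ℝ × ℝ` is a lattice point if both coordinates are integers. -/
def IsLatticePoint (x : ℝ × ℝ) : Prop := ∃ a b : ℤ, x = ((a : ℝ), (b : ℝ))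

/-- `A(P)`: the set of lattice points of `P`. -/
def latticePoints (P : Set (ℝ × ℝ)) : Set (ℝ × ℝ) := {x ∈ P | IsLatticePoint x}

/-- A lattice polygon: the convex hull of a finite set of lattice points. -/
def IsLatticePolygon (P : Set (ℝ × ℝ)) : Prop :=
  ∃ S : Finset (ℝ × ℝ), (∀ x ∈ S, IsLatticePoint x) ∧ P = convexHull ℝ (S : Set (ℝ × ℝ))

/-- The cells of the subdivision induced by a height function `h` on the point set `A`:
the two-dimensional sets of the form `conv {x ∈ A | ℓ x = h x}` where `ℓ` is an affine
map with `ℓ ≤ h` on `A`. -/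
def inducedCells (A : Set (ℝ × ℝ)) (h : ℝ × ℝ → ℝ) : Set (Set (ℝ × ℝ)) :=
  { C | (∃ ℓ : (ℝ × ℝ) →ᵃ[ℝ] ℝ, (∀ x ∈ A, ℓ x ≤ h x) ∧
      C = convexHull ℝ {x ∈ A | ℓ x = h x}) ∧ ¬ Collinear ℝ C }

/-- A subdivision of a two-dimensional lattice polygon `P`: a finite collection of
two-dimensional lattice polygons covering `P`, any two of which meet in a common
(possibly empty) face of each. -/
def IsSubdivision (P : Set (ℝ × ℝ)) (Δ : Set (Set (ℝ × ℝ))) : Prop :=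
  Δ.Finite ∧
  (∀ C ∈ Δ, IsLatticePolygon C ∧ ¬ Collinear ℝ C) ∧
  ⋃₀ Δ = P ∧
  ∀ C ∈ Δ, ∀ D ∈ Δ, IsExposed ℝ C (C ∩ D) ∧ IsExposed ℝ D (C ∩ D)

/-- A regular subdivision: one induced by some height function on the lattice points. -/
def IsRegularSubdivision (P : Set (ℝ × ℝ)) (Δ : Set (Set (ℝ × ℝ))) : Prop :=
  IsSubdivision P Δ ∧ ∃ h : ℝ × ℝ → ℝ, Δ = inducedCells (latticePoints P) h

/-- The segment `[p,q]` is an edge of the convex polygon `P`: it is contained in `P` and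
there is an affine map vanishing on `[p,q]` and strictly positive on `P \ [p,q]`. -/
def IsEdgeSeg (P : Set (ℝ × ℝ)) (p q : ℝ × ℝ) : Prop :=
  segment ℝ p q ⊆ P ∧
  ∃ f : (ℝ × ℝ) →ᵃ[ℝ] ℝ, (∀ x ∈ segment ℝ p q, f x = 0) ∧
    (∀ x ∈ P \ segment ℝ p q, 0 < f x)

/-- The segment between the lattice points `p ≠ q` has lattice length one: `p` and `q` are
the only lattice points it contains. -/
def LatticeLengthOne (p q : ℝ × ℝ) : Prop :=
  p ≠ q ∧ IsLatticePoint p ∧ IsLatticePoint q ∧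
    ∀ x ∈ segment ℝ p q, IsLatticePoint x → x = p ∨ x = q

open Set Filter MeasureTheory

lemma aux_face {S : Set (ℝ × ℝ)} (g : (ℝ × ℝ) →ᵃ[ℝ] ℝ) (hg : ∀ s ∈ S, g s ≤ 0)
    {x : ℝ × ℝ} (hx : x ∈ convexHull ℝ S) :
    g x < 0 ∨ (g x = 0 ∧ x ∈ convexHull ℝ {s ∈ S | g s = 0}) := by
  have hc : Convex ℝ {x | g x < 0 ∨ (g x = 0 ∧ x ∈ convexHull ℝ {s ∈ S | g s = 0})} := by
    rw [convex_iff_forall_pos]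
    intro x hx y hy a b ha hb hab
    have e : g (a • x + b • y) = a * g x + b * g y := by
      have := Convex.combo_affine_apply (f := g) (x := x) (y := y) hab
      simpa using this
    simp only [mem_ofPred_eq] at hx hy ⊢
    rw [e]
    rcases hx with hx | ⟨hx, hx'⟩ <;> rcases hy with hy | ⟨hy, hy'⟩
    · left; nlinarith
    · left; rw [hy]; nlinarith
    · left; rw [hx]; nlinarith
    · right
      exact ⟨by rw [hx, hy]; ring, (convex_convexHull ℝ _) hx' hy' ha.le hb.le hab⟩
  refine convexHull_min ?_ hc hx
  intro s hs
  rcases (hg s hs).lt_or_eq with h | h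
  · exact Or.inl h
  · exact Or.inr ⟨h, subset_convexHull ℝ _ ⟨hs, h⟩⟩

lemma aux_le {A : Set (ℝ × ℝ)} {h : ℝ × ℝ → ℝ} (l m : (ℝ × ℝ) →ᵃ[ℝ] ℝ)
    (hm : ∀ x ∈ A, m x ≤ h x) {x : ℝ × ℝ}
    (hx : x ∈ convexHull ℝ {x ∈ A | l x = h x}) :
    m x < l x ∨ (m x = l x ∧ x ∈ convexHull ℝ {x ∈ A | m x = h x}) := by
  have := aux_face (S := {x ∈ A | l x = h x}) (m - l) (by
    rintro s ⟨hs, hs'⟩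
    have := hm s hs
    simp; linarith) hx
  rcases this with h1 | ⟨h1, h2⟩
  · left; simpa using h1
  · right
    refine ⟨by simpa [sub_eq_zero] using h1, convexHull_mono ?_ h2⟩
    rintro s ⟨⟨hs, hs'⟩, h3⟩
    refine ⟨hs, ?_⟩
    simp [sub_eq_zero] at h3
    rw [h3, hs']

lemma aux_exposed {A : Set (ℝ × ℝ)} {h : ℝ × ℝ → ℝ} {C D : Set (ℝ × ℝ)}
    (hC : C ∈ inducedCells A h) (hD : D ∈ inducedCells A h) : IsExposed ℝ C (C ∩ D) := by
  obtain ⟨⟨l, hl, rfl⟩, -⟩ := hC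
  obtain ⟨⟨m, hm, rfl⟩, -⟩ := hD
  rintro ⟨z, hzC, hzD⟩
  have hz : m z = l z := by
    rcases aux_le l m hm hzC with h1 | ⟨h1, -⟩
    · rcases aux_le m l hl hzD with h2 | ⟨h2, -⟩ <;> linarith
    · exact h1
  have dec : ∀ x, m x - l x = (m - l).linear x + (m - l) 0 := by
    intro x
    have := congrFun (AffineMap.decomp (m - l)) x
    simpa using this
  refine ⟨LinearMap.toContinuousLinearMap (m - l).linear, ?_⟩
  ext x
  simp only [mem_inter_iff, mem_ofPred_eq, LinearMap.coe_toContinuousLinearMap']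
  constructor
  · rintro ⟨hx, hx'⟩
    refine ⟨hx, fun y hy => ?_⟩
    have h1 : m y ≤ l y := by
      rcases aux_le l m hm hy with h1 | ⟨h1, -⟩ <;> linarith
    have h2 : l x ≤ m x := by
      rcases aux_le m l hl hx' with h1 | ⟨h1, -⟩ <;> linarith
    have := dec x
    have := dec y
    linarith
  · rintro ⟨hx, hx'⟩
    refine ⟨hx, ?_⟩
    have h3 := hx' z hzC
    have := dec x
    have := dec z
    rcases aux_le l m hm hx with h1 | ⟨-, h1⟩
    · linarith
    · exact h1

lemma aux_span {C : Set (ℝ × ℝ)} (hC : ¬ Collinear ℝ C) : affineSpan ℝ C = ⊤ := by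
  have hne : C.Nonempty := by
    by_contra h
    rw [not_nonempty_iff_eq_empty] at h
    exact hC (h ▸ collinear_empty _ _)
  rw [AffineSubspace.affineSpan_eq_top_iff_vectorSpan_eq_top_of_nonempty _ _ _ hne]
  apply Submodule.eq_top_of_finrank_eq
  rw [collinear_iff_finrank_le_one] at hC
  have h2 : Module.finrank ℝ (ℝ × ℝ) = 2 := by simp
  have := Submodule.finrank_le (vectorSpan ℝ C)
  omega

lemma aux_vol {C : Set (ℝ × ℝ)} (hC : Collinear ℝ C) : volume C = 0 := by
  refine measure_mono_null (subset_affineSpan ℝ C) (Measure.addHaar_affineSubspace _ _ ?_)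
  intro h
  rw [collinear_iff_finrank_le_one, ← direction_affineSpan, h,
    AffineSubspace.direction_top, finrank_top] at hC
  simp at hC

lemma aux_vol' {C : Set (ℝ × ℝ)} (hC : ¬ Collinear ℝ C) (hc : Convex ℝ C) : volume C ≠ 0 := by
  have h := (hc.interior_nonempty_iff_affineSpan_eq_top).2 (aux_span hC)
  intro h0
  exact (isOpen_interior.measure_pos volume h).ne' (measure_mono_null interior_subset h0)

lemma aux_cells {A : Set (ℝ × ℝ)} {h : ℝ × ℝ → ℝ} {Δ : Set (Set (ℝ × ℝ))}
    (hfin : Δ.Finite) (hA : A ⊆ ⋃₀ Δ) (hconv : Convex ℝ (⋃₀ Δ))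
    (hΔ : Δ ⊆ inducedCells A h) : Δ = inducedCells A h := by
  refine hΔ.antisymm fun C hC => ?_
  obtain ⟨⟨l, hl, hCl⟩, hCc⟩ := hC
  have hcC : Convex ℝ C := hCl ▸ convex_convexHull _ _
  have hsub : C ⊆ ⋃₀ Δ := by
    rw [hCl]
    exact convexHull_min (fun x hx => hA hx.1) hconv
  obtain ⟨D, hD, hCD⟩ : ∃ D ∈ Δ, ¬ Collinear ℝ (C ∩ D) := by
    by_contra! hcon
    refine aux_vol' hCc hcC (measure_mono_null (t := ⋃ D ∈ Δ, C ∩ D) ?_ ?_)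
    · intro x hx
      obtain ⟨D, hD, hxD⟩ := hsub hx
      simp only [mem_iUnion]
      exact ⟨D, hD, hx, hxD⟩
    · exact (measure_biUnion_null_iff hfin.countable).2 fun D hD => aux_vol (hcon D hD)
  obtain ⟨⟨m, hm, hDm⟩, -⟩ := hΔ hD
  have heq : l = m := by
    refine AffineMap.ext_on (aux_span hCD) ?_
    rintro x ⟨hxC, hxD⟩
    rw [hCl] at hxC
    rw [hDm] at hxD
    rcases aux_le l m hm hxC with h1 | ⟨h1, -⟩
    · rcases aux_le m l hl hxD with h2 | ⟨h2, -⟩ <;> linarith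
    · exact h1.symm
  have : C = D := by rw [hCl, hDm, heq]
  exact this ▸ hD

lemma aux_compact {P : Set (ℝ × ℝ)} (hP : IsLatticePolygon P) : IsCompact P := by
  obtain ⟨S, -, rfl⟩ := hP
  exact S.finite_toSet.isCompact_convexHull (𝕜 := ℝ)

lemma aux_finite {P : Set (ℝ × ℝ)} (hP : IsLatticePolygon P) : (latticePoints P).Finite := by
  have hb := (aux_compact hP).isBounded
  obtain ⟨R, hR⟩ := hb.exists_norm_le
  obtain ⟨n, hn⟩ := exists_nat_ge R
  refine (((Set.finite_Icc (-(n:ℤ)) n).prod (Set.finite_Icc (-(n:ℤ)) n)).image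
    (fun z : ℤ × ℤ => ((z.1 : ℝ), (z.2 : ℝ)))).subset ?_
  rintro x ⟨hx, a, b, rfl⟩
  have h := (hR _ hx).trans hn
  rw [Prod.norm_def, max_le_iff] at h
  simp only [Real.norm_eq_abs, abs_le] at h
  obtain ⟨⟨h1, h2⟩, h3, h4⟩ := h
  refine ⟨(a, b), ⟨⟨?_, ?_⟩, ?_, ?_⟩, rfl⟩
  · exact_mod_cast h1
  · exact_mod_cast h2
  · exact_mod_cast h3
  · exact_mod_cast h4

lemma aux_affine {p q : ℝ × ℝ} (hpq : p ≠ q) (u v : ℝ) :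
    ∃ a : (ℝ × ℝ) →ᵃ[ℝ] ℝ, a p = u ∧ a q = v := by
  obtain ⟨g, hg⟩ := SeparatingDual.exists_eq_one (R := ℝ) (sub_ne_zero.2 hpq.symm)
  refine ⟨((v - u) • (g : (ℝ × ℝ) →ₗ[ℝ] ℝ)).toAffineMap +
    AffineMap.const ℝ (ℝ × ℝ) (u - (v - u) * g p), ?_, ?_⟩
  · simp
  · have : g q = 1 + g p := by rw [map_sub] at hg; linarith
    simp [this]; ring

lemma aux_sign {P₁ P₂ : Set (ℝ × ℝ)} {p q : ℝ × ℝ} (h₁ : IsClosed P₁) (h₂ : IsClosed P₂)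
    (hdim₁ : ¬ Collinear ℝ P₁) (hcap : P₁ ∩ P₂ = segment ℝ p q)
    (hconv : Convex ℝ (P₁ ∪ P₂)) (f : (ℝ × ℝ) →ᵃ[ℝ] ℝ)
    (hf0 : ∀ x ∈ segment ℝ p q, f x = 0)
    (hf1 : ∀ x ∈ P₁ \ segment ℝ p q, 0 < f x) :
    ∀ y ∈ P₂ \ segment ℝ p q, f y < 0 := by
  rintro y ⟨hy, hys⟩
  obtain ⟨x, hx, hxs⟩ : ∃ x ∈ P₁, x ∉ segment ℝ p q := by
    by_contra! hcon
    refine hdim₁ ((collinear_iff_exists_forall_eq_smul_vadd P₁).2 ⟨p, q - p, fun x hx => ?_⟩)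
    obtain ⟨θ, -, hθ⟩ := (segment_eq_image' ℝ p q) ▸ hcon x hx
    exact ⟨θ, by rw [← hθ, vadd_eq_add, add_comm]⟩
  have hx0 := hf1 x ⟨hx, hxs⟩
  obtain ⟨z, hz, hz1, hz2⟩ := isPreconnected_closed_iff.1
    (convex_segment (𝕜 := ℝ) x y).isPreconnected P₁ P₂ h₁ h₂
    (hconv.segment_subset (Or.inl hx) (Or.inr hy))
    ⟨x, left_mem_segment ℝ x y, hx⟩ ⟨y, right_mem_segment ℝ x y, hy⟩
  have hzs : z ∈ segment ℝ p q := hcap ▸ ⟨hz1, hz2⟩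
  have hz0 := hf0 z hzs
  obtain ⟨a, b, ha, hb, hab, rfl⟩ := hz
  have e : f (a • x + b • y) = a * f x + b * f y := by
    have := Convex.combo_affine_apply (f := f) (x := x) (y := y) hab
    simpa using this
  rw [e] at hz0
  rcases ha.eq_or_lt with rfl | ha
  · exfalso; apply hys
    have : b = 1 := by linarith
    subst this
    simpa using hzs
  · have := mul_pos ha hx0
    by_contra! hcon
    have := mul_nonneg hb hcon
    linarith

theorem regular_subdivision_glue
    (P₁ P₂ : Set (ℝ × ℝ)) (Δ₁ Δ₂ : Set (Set (ℝ × ℝ))) (p q : ℝ × ℝ)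
    (hP₁ : IsLatticePolygon P₁) (hP₂ : IsLatticePolygon P₂)
    (hdim₁ : ¬ Collinear ℝ P₁) (hdim₂ : ¬ Collinear ℝ P₂)
    (hΔ₁ : IsRegularSubdivision P₁ Δ₁) (hΔ₂ : IsRegularSubdivision P₂ Δ₂)
    (hpq : IsLatticePoint p ∧ IsLatticePoint q)
    (hcap : P₁ ∩ P₂ = segment ℝ p q)
    (hlen : LatticeLengthOne p q)
    (hedge₁ : IsEdgeSeg P₁ p q) (hedge₂ : IsEdgeSeg P₂ p q)
    (hconv : Convex ℝ (P₁ ∪ P₂)) :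
    IsRegularSubdivision (P₁ ∪ P₂) (Δ₁ ∪ Δ₂) := by
  classical
  obtain ⟨⟨fin₁, poly₁, un₁, -⟩, h₁, ind₁⟩ := hΔ₁
  obtain ⟨⟨fin₂, poly₂, un₂, -⟩, h₂, ind₂⟩ := hΔ₂
  obtain ⟨-, f, hf0, hf1⟩ := hedge₁
  obtain ⟨hne, -, -, hlat⟩ := hlen
  have hf2 := aux_sign (aux_compact hP₁).isClosed (aux_compact hP₂).isClosed hdim₁ hcap hconv
    f hf0 hf1
  obtain ⟨a, hap, haq⟩ := aux_affine hne (h₁ p - h₂ p) (h₁ q - h₂ q)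
  have hc₁ : ∀ C ∈ Δ₁, ∃ l : (ℝ × ℝ) →ᵃ[ℝ] ℝ, (∀ x ∈ latticePoints P₁, l x ≤ h₁ x) ∧
      C = convexHull ℝ {x ∈ latticePoints P₁ | l x = h₁ x} := by
    intro C hC
    rw [ind₁] at hC
    exact hC.1
  have hc₂ : ∀ C ∈ Δ₂, ∃ l : (ℝ × ℝ) →ᵃ[ℝ] ℝ, (∀ x ∈ latticePoints P₂, l x ≤ h₂ x) ∧
      C = convexHull ℝ {x ∈ latticePoints P₂ | l x = h₂ x} := by
    intro C hC
    rw [ind₂] at hC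
    exact hC.1
  choose! L₁ hL₁ hLC₁ using hc₁
  choose! L₂ hL₂ hLC₂ using hc₂
  have ev₁ : ∀ᶠ N : ℝ in atTop, ∀ C ∈ Δ₁, ∀ x ∈ latticePoints P₂, x ∉ segment ℝ p q →
      L₁ C x - a x + N * f x < h₂ x := by
    refine (eventually_all_finite fin₁).2 fun C _ =>
      (eventually_all_finite (aux_finite hP₂)).2 fun x hx => ?_
    by_cases hxs : x ∈ segment ℝ p q
    · exact Eventually.of_forall fun N h => absurd hxs h
    have hfx := hf2 x ⟨hx.1, hxs⟩
    filter_upwards [eventually_gt_atTop ((h₂ x - (L₁ C x - a x)) / f x)] with N hN _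
    rw [div_lt_iff_of_neg hfx] at hN
    linarith
  have ev₂ : ∀ᶠ N : ℝ in atTop, ∀ C ∈ Δ₂, ∀ x ∈ latticePoints P₁, x ∉ segment ℝ p q →
      L₂ C x < h₁ x - a x + N * f x := by
    refine (eventually_all_finite fin₂).2 fun C _ =>
      (eventually_all_finite (aux_finite hP₁)).2 fun x hx => ?_
    by_cases hxs : x ∈ segment ℝ p q
    · exact Eventually.of_forall fun N h => absurd hxs h
    have hfx := hf1 x ⟨hx.1, hxs⟩
    filter_upwards [eventually_gt_atTop ((L₂ C x - (h₁ x - a x)) / f x)] with N hN _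
    rw [div_lt_iff₀ hfx] at hN
    linarith
  obtain ⟨N, hN₁, hN₂⟩ := (ev₁.and ev₂).exists
  set h : ℝ × ℝ → ℝ := fun x => if x ∈ P₁ then h₁ x - a x + N * f x else h₂ x with hh
  have hh₁ : ∀ x ∈ P₁, h x = h₁ x - a x + N * f x := fun x hx => by simp [hh, hx]
  have hh₂ : ∀ x ∈ latticePoints P₂, h x = h₂ x := by
    rintro x ⟨hx, hxl⟩
    by_cases hx1 : x ∈ P₁
    · have hxs : x ∈ segment ℝ p q := hcap ▸ ⟨hx1, hx⟩
      rw [hh₁ x hx1, hf0 x hxs]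
      rcases hlat x hxs hxl with rfl | rfl
      · rw [hap]; ring
      · rw [haq]; ring
    · simp [hh, hx1]
  have hunion : latticePoints (P₁ ∪ P₂) = latticePoints P₁ ∪ latticePoints P₂ := by
    ext x; simp [latticePoints, or_and_right]
  have hsegP : segment ℝ p q ⊆ P₁ ∩ P₂ := hcap.ge
  have hsub : Δ₁ ∪ Δ₂ ⊆ inducedCells (latticePoints (P₁ ∪ P₂)) h := by
    rw [hunion]
    rintro C (hC | hC)
    · refine ⟨⟨L₁ C - a + N • f, ?_, ?_⟩, (poly₁ C hC).2⟩
      · intro x hx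
        by_cases hx1 : x ∈ latticePoints P₁
        · have := hL₁ C hC x hx1
          rw [hh₁ x hx1.1]
          simp; linarith
        · have hx2 := hx.resolve_left hx1
          have := hN₁ C hC x hx2 (fun hs => hx1 ⟨(hsegP hs).1, hx2.2⟩)
          rw [hh₂ x hx2]
          simp; linarith
      · refine (hLC₁ C hC).trans (congrArg _ ?_)
        ext x
        constructor
        · rintro ⟨hx, hx'⟩
          refine ⟨Or.inl hx, ?_⟩
          rw [hh₁ x hx.1]
          simp [hx']
        · rintro ⟨hx, hx'⟩
          by_cases hx1 : x ∈ latticePoints P₁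
          · refine ⟨hx1, ?_⟩
            rw [hh₁ x hx1.1] at hx'
            simp at hx'
            linarith
          · have hx2 := hx.resolve_left hx1
            have := hN₁ C hC x hx2 (fun hs => hx1 ⟨(hsegP hs).1, hx2.2⟩)
            rw [hh₂ x hx2] at hx'
            simp at hx'
            linarith
    · refine ⟨⟨L₂ C, ?_, ?_⟩, (poly₂ C hC).2⟩
      · intro x hx
        by_cases hx2 : x ∈ latticePoints P₂
        · rw [hh₂ x hx2]
          exact hL₂ C hC x hx2
        · have hx1 := hx.resolve_right hx2
          have := hN₂ C hC x hx1 (fun hs => hx2 ⟨(hsegP hs).2, hx1.2⟩)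
          rw [hh₁ x hx1.1]
          exact this.le
      · refine (hLC₂ C hC).trans (congrArg _ ?_)
        ext x
        constructor
        · rintro ⟨hx, hx'⟩
          exact ⟨Or.inr hx, by rw [hh₂ x hx, hx']⟩
        · rintro ⟨hx, hx'⟩
          by_cases hx2 : x ∈ latticePoints P₂
          · exact ⟨hx2, by rw [hx', hh₂ x hx2]⟩
          · have hx1 := hx.resolve_right hx2
            have := hN₂ C hC x hx1 (fun hs => hx2 ⟨(hsegP hs).2, hx1.2⟩)
            rw [hh₁ x hx1.1] at hx'
            linarith
  have hun : ⋃₀ (Δ₁ ∪ Δ₂) = P₁ ∪ P₂ := by rw [sUnion_union, un₁, un₂]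
  refine ⟨⟨fin₁.union fin₂, ?_, hun, ?_⟩, h, ?_⟩
  · rintro C (hC | hC)
    · exact poly₁ C hC
    · exact poly₂ C hC
  · intro C hC D hD
    refine ⟨aux_exposed (hsub hC) (hsub hD), ?_⟩
    rw [inter_comm]
    exact aux_exposed (hsub hD) (hsub hC)
  · refine aux_cells (fin₁.union fin₂) ?_ ?_ hsub
    · rw [hun]; exact fun x hx => hx.1
    · rw [hun]; exact hconv
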